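/- For every n=(n₁,n₂,n₃)∈ℤ³ with all nᵢ≥1, the type-I box spline B_n is globally of class C^r on ℝ² with r = min{n₁+n₂, n₁+n₃, n₂+n₃} − 2; more precisely, for each i∈{1,2,3}, B_n is of class C^{dᵢ(n)} on a neighbourhood of every edge of G of type i, where d(n) = (n₂+n₃−2, n₁+n₃−2, n₁+n₂−2); in particular B_n ∈ S^{d(n)}(M, P_{n₁+n₂+n₃−2}) for every multicell domain M of G. -/

import Mathlib

/- ## The three-directional (type-I) grid -/

noncomputable section

open MvPolynomial Set Function

/-- Points of the plane. -/
abbrev Pt := ℝ × ℝ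

/-- Bivariate real polynomials `ℝ[x,y]`. -/
abbrev BPoly := MvPolynomial (Fin 2) ℝ

/-- Evaluation of a bivariate polynomial at a point of the plane. -/
def evalP (q : BPoly) (p : Pt) : ℝ := MvPolynomial.eval ![p.1, p.2] q

/-- Triangles of the three-directional grid `G`:  `⟨v, false⟩` is the "lower"
triangle with vertices `v, v+(1,0), v+(1,1)`, and `⟨v, true⟩` is the "upper"
triangle with vertices `v, v+(0,1), v+(1,1)`. -/
structure Tri where
  v : ℤ × ℤ
  up : Bool
deriving DecidableEq

namespace Tri

/-- The open triangle in the plane realizing a combinatorial triangle. -/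
def toSet (T : Tri) : Set Pt :=
  if T.up then
    {p | (T.v.1 : ℝ) < p.1 ∧ p.1 - (T.v.1 : ℝ) < p.2 - (T.v.2 : ℝ) ∧ p.2 < (T.v.2 : ℝ) + 1}
  else
    {p | (T.v.2 : ℝ) < p.2 ∧ p.2 - (T.v.2 : ℝ) < p.1 - (T.v.1 : ℝ) ∧ p.1 < (T.v.1 : ℝ) + 1}

/-- The closed triangle. -/
def cl (T : Tri) : Set Pt := closure T.toSet

/-- The three lattice vertices of a triangle. -/
def vertices (T : Tri) : Finset (ℤ × ℤ) :=
  if T.up then {T.v, (T.v.1, T.v.2 + 1), (T.v.1 + 1, T.v.2 + 1)}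
  else {T.v, (T.v.1 + 1, T.v.2), (T.v.1 + 1, T.v.2 + 1)}

end Tri

/-- Edges of the grid: a lattice point together with a direction type
(`0 ↦ e₁ = (1,0)`, `1 ↦ e₂ = (0,1)`, `2 ↦ e₃ = (1,1)`); the edge of type `i`
at `v` joins `v` to `v + eᵢ`. -/
abbrev Edge := (ℤ × ℤ) × Fin 3

/-- The three direction vectors `e₁, e₂, e₃`. -/
def dirZ : Fin 3 → ℤ × ℤ := ![(1, 0), (0, 1), (1, 1)]

/-- The three edges of a triangle. -/
def Tri.edges (T : Tri) : Finset Edge :=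
  if T.up then {((T.v.1, T.v.2 + 1), 0), (T.v, 1), (T.v, 2)}
  else {(T.v, 0), ((T.v.1 + 1, T.v.2), 1), (T.v, 2)}

/-- The open segment realizing an edge. -/
def Edge.seg (ε : Edge) : Set Pt :=
  {p | ∃ t : ℝ, 0 < t ∧ t < 1 ∧
    p = ((ε.1.1 : ℝ) + t * ((dirZ ε.2).1 : ℝ), (ε.1.2 : ℝ) + t * ((dirZ ε.2).2 : ℝ))}

/-- `M*`: the union of the closed triangles of a multicell domain. -/
def Mstar (M : Finset Tri) : Set Pt := ⋃ T ∈ M, T.cl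

/-- `ℙ(M,V)`: continuous functions on `M*` whose restriction to each triangle
of `M` is the restriction of a polynomial in `V`. -/
def PP (M : Finset Tri) (V : Set BPoly) : Set (Pt → ℝ) :=
  {f | ContinuousOn f (Mstar M) ∧ ∀ T ∈ M, ∃ q ∈ V, EqOn f (evalP q) T.toSet}

/-- The diamond of an edge: union of the closed triangles of `M` having `ε`
as an edge. -/
def diamond (M : Finset Tri) (ε : Edge) : Set Pt :=
  ⋃ T ∈ M.filter (fun T => ε ∈ T.edges), T.cl

/-- The spline space with edge smoothness `d` on the multicell domain `M`:
piecewise polynomials (pieces from `V`) which are `C^{dᵢ}` on the diamond of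
every edge of type `i` of `M`. -/
def SplineSpace (M : Finset Tri) (V : Set BPoly) (d : Fin 3 → ℕ) : Set (Pt → ℝ) :=
  {f | f ∈ PP M V ∧
    ∀ ε : Edge, (∃ T ∈ M, ε ∈ T.edges) → ContDiffOn ℝ (d ε.2) f (diamond M ε)}

/-- Directional derivative of a polynomial along an integer vector. -/
def dirD (e : ℤ × ℤ) (q : BPoly) : BPoly :=
  (e.1 : ℝ) • MvPolynomial.pderiv (0 : Fin 2) q + (e.2 : ℝ) • MvPolynomial.pderiv (1 : Fin 2) q

/-- The mixed directional derivative operator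
`D_s = (∂_{e₁})^{s₁} (∂_{e₂})^{s₂} (∂_{e₃})^{s₃}`. -/
def Dmix (s : Fin 3 → ℕ) (q : BPoly) : BPoly :=
  (dirD (dirZ 0))^[s 0] ((dirD (dirZ 1))^[s 1] ((dirD (dirZ 2))^[s 2] q))

/-- The index sets `Iᵢ^d`; `I₁^d = {s | s₂+s₃ ≤ d₁}` and cyclically. -/
def Iset (d : Fin 3 → ℕ) (i : Fin 3) : Set (Fin 3 → ℕ) :=
  {s | s (i + 1) + s (i + 2) ≤ d i}

/-- Two triangles of the grid are adjacent if they are distinct and share an edge. -/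
def Adj (T T' : Tri) : Prop := T ≠ T' ∧ ∃ ε : Edge, ε ∈ T.edges ∧ ε ∈ T'.edges

/-- `c` is an edge-connected chain of length `m` from `T` to `T'`. -/
def TriIsChain (T T' : Tri) (m : ℕ) (c : ℕ → Tri) : Prop :=
  c 0 = T ∧ c m = T' ∧ ∀ k < m, Adj (c k) (c (k + 1))

/-- The set of types of the edges crossed by a chain. -/
def chainTypes (m : ℕ) (c : ℕ → Tri) : Set (Fin 3) :=
  {i | ∃ k < m, ∃ ε : Edge, ε.2 = i ∧ ε ∈ (c k).edges ∧ ε ∈ (c (k + 1)).edges}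

/-- Minimal length of an edge-connected chain between two triangles. -/
def minLen (T T' : Tri) : ℕ := sInf {m | ∃ c, TriIsChain T T' m c}

/-- The smoothness type `SmType(△,△')`: the types of the edges crossed by a
shortest edge-connected chain from `△` to `△'`. -/
def SmType (T T' : Tri) : Set (Fin 3) :=
  {i | ∃ c, TriIsChain T T' (minLen T T') c ∧ i ∈ chainTypes (minLen T T') c}

/-- `q` is the polynomial piece of `f` on the triangle `T`. -/
def IsPiece (f : Pt → ℝ) (T : Tri) (q : BPoly) : Prop := EqOn f (evalP q) T.toSet

/-- The strongly regular spline space `Ŝ^d(M,V)`: piecewise polynomials such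
that for any two triangles of `M` with intersecting closures, the derivatives
`D_s`, `s ∈ ⋂_{i ∈ SmType(△,△')} Iᵢ^d`, of the two polynomial pieces agree on the
intersection of the closures (i.e. `D_s f` is continuous there). -/
def StrongSpline (M : Finset Tri) (V : Set BPoly) (d : Fin 3 → ℕ) : Set (Pt → ℝ) :=
  {f | f ∈ PP M V ∧
    ∀ T ∈ M, ∀ T' ∈ M, (T.cl ∩ T'.cl).Nonempty →
      ∀ s : Fin 3 → ℕ, (∀ i ∈ SmType T T', s ∈ Iset d i) →
        ∀ q q' : BPoly, IsPiece f T q → IsPiece f T' q' →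
          ∀ x ∈ T.cl ∩ T'.cl, evalP (Dmix s q) x = evalP (Dmix s q') x}

/-- Kissing triangles: the closures intersect in exactly one point. -/
def Kissing (T T' : Tri) : Prop := ∃ p : Pt, T.cl ∩ T'.cl = {p}

/-- An over-concave vertex of `M`: exactly one triangle of `star(ν)` is
missing from `M`. -/
def OverConcave (M : Finset Tri) (ν : ℤ × ℤ) : Prop :=
  ∃! T : Tri, ν ∈ T.vertices ∧ T ∉ M

/- ## Type-I box splines -/

/-- The Courant hat function `B_{(1,1,1)}`: the piecewise linear function on
`G` supported on `star((1,1))` with value `1` at `(1,1)` and `0` at all other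
lattice points. -/
def hat (p : Pt) : ℝ :=
  max 0 (min (min (min p.1 p.2) (min (2 - p.1) (2 - p.2)))
             (min (1 - (p.1 - p.2)) (1 + (p.1 - p.2))))

/-- The type-I box spline `B_{(n₁,n₂,n₃)}`, defined by repeated directional
convolution starting from the Courant hat function (the result is independent
of the order of the convolutions); junk value `0` if some `nᵢ = 0`. -/
noncomputable def boxN : ℕ → ℕ → ℕ → Pt → ℝ
  | 0, _, _, _ => 0
  | _ + 1, 0, _, _ => 0
  | _ + 1, _ + 1, 0, _ => 0
  | 1, 1, 1, p => hat p
  | a + 2, b + 1, c + 1, p =>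
      ∫ t in (0:ℝ)..1, boxN (a + 1) (b + 1) (c + 1) (p.1 - t, p.2)
  | 1, b + 2, c + 1, p =>
      ∫ t in (0:ℝ)..1, boxN 1 (b + 1) (c + 1) (p.1, p.2 - t)
  | 1, 1, c + 2, p =>
      ∫ t in (0:ℝ)..1, boxN 1 1 (c + 1) (p.1 - t, p.2 - t)
  termination_by a b c _ => a + b + c
  decreasing_by all_goals omega

/-- The translate `B_n(· - w)` of the box spline. -/
def trBox (n₁ n₂ n₃ : ℕ) (w : ℤ × ℤ) (p : Pt) : ℝ :=
  boxN n₁ n₂ n₃ (p.1 - (w.1 : ℝ), p.2 - (w.2 : ℝ))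

/-- `Supp_n(△̂)`: lattice translates of `B_n` that do not vanish identically
on the triangle `T`. -/
def activeSet (n₁ n₂ n₃ : ℕ) (T : Tri) : Set (ℤ × ℤ) :=
  {w | ¬ ∀ p ∈ T.toSet, trBox n₁ n₂ n₃ w p = 0}

/-- `c` is the coefficient vector of the polynomial `q` with respect to the
active box-spline translates on `T`:  `q|_T = Σ_β λ_T^β(q)·β|_T`. -/
def Represents (n₁ n₂ n₃ : ℕ) (T : Tri) (q : BPoly) (c : (ℤ × ℤ) →₀ ℝ) : Prop :=
  ↑c.support ⊆ activeSet n₁ n₂ n₃ T ∧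
    ∀ p ∈ T.toSet, evalP q p = c.sum fun w a => a * trBox n₁ n₂ n₃ w p

/-- `V_n` (relative to the triangle `T`): polynomials whose restriction to `T`
is a linear combination of the active box-spline translates on `T`. -/
def VSpace (n₁ n₂ n₃ : ℕ) (T : Tri) : Set BPoly :=
  {q | ∃ c, Represents n₁ n₂ n₃ T q c}


/-! ### Two directional derivatives give smoothness -/

lemma cd12 {k : ℕ} {f g₁ g₂ : Pt → ℝ}
    (h₁ : ∀ x y, HasDerivAt (fun s => f (s, y)) (g₁ (x, y)) x)
    (h₂ : ∀ x y, HasDerivAt (fun s => f (x, s)) (g₂ (x, y)) y)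
    (c₁ : ContDiff ℝ k g₁) (c₂ : ContDiff ℝ k g₂) : ContDiff ℝ ((k + 1 : ℕ)) f := by
  have key : ContDiff ℝ ((k : WithTop ℕ∞) + 1) f := by
    rw [contDiff_succ_iff_hasFDerivAt]
    refine ⟨fun p => (ContinuousLinearMap.toSpanSingleton ℝ (g₁ p)).coprod
      (ContinuousLinearMap.toSpanSingleton ℝ (g₂ p)), ?_, ?_⟩
    · have e : (fun p : Pt => (ContinuousLinearMap.toSpanSingleton ℝ (g₁ p)).coprod
          (ContinuousLinearMap.toSpanSingleton ℝ (g₂ p))) =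
          fun p => g₁ p • ContinuousLinearMap.fst ℝ ℝ ℝ + g₂ p • ContinuousLinearMap.snd ℝ ℝ ℝ := by
        ext p <;> simp
      rw [e]
      exact (c₁.smul contDiff_const).add (c₂.smul contDiff_const)
    · intro p
      have tc : Continuous (fun a : ℝ => ContinuousLinearMap.toSpanSingleton ℝ a) := by
        have : (fun a : ℝ => ContinuousLinearMap.toSpanSingleton ℝ a) =
          fun a => a • ContinuousLinearMap.id ℝ ℝ := by ext; simp
        rw [this]; fun_prop
      have := hasStrictFDerivAt_uncurry_coprod (𝕜 := ℝ) (u := p) (f := fun x y => f (x, y))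
        (f₁ := fun x y => ContinuousLinearMap.toSpanSingleton ℝ (g₁ (x, y)))
        (f₂ := fun x y => ContinuousLinearMap.toSpanSingleton ℝ (g₂ (x, y)))
        (Filter.Eventually.of_forall fun v => (h₁ v.1 v.2).hasFDerivAt)
        (Filter.Eventually.of_forall fun v => (h₂ v.1 v.2).hasFDerivAt)
        (tc.comp c₁.continuous).continuousAt (tc.comp c₂.continuous).continuousAt
      exact this.hasFDerivAt
  exact_mod_cast key

lemma cd13 {k : ℕ} {f g₁ g₃ : Pt → ℝ}
    (h₁ : ∀ x y, HasDerivAt (fun s => f (s, y)) (g₁ (x, y)) x)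
    (h₃ : ∀ x y, HasDerivAt (fun s => f (x + s, y + s)) (g₃ (x, y)) 0)
    (c₁ : ContDiff ℝ k g₁) (c₃ : ContDiff ℝ k g₃) : ContDiff ℝ ((k + 1 : ℕ)) f := by
  have : ContDiff ℝ ((k + 1 : ℕ)) (fun p : Pt => f (p.1 + p.2, p.2)) := by
    refine cd12 (g₁ := fun p => g₁ (p.1 + p.2, p.2)) (g₂ := fun p => g₃ (p.1 + p.2, p.2))
      ?_ ?_ (c₁.comp (by fun_prop)) (c₃.comp (by fun_prop))
    · intro x y
      simpa using (h₁ (x + y) y).comp_add_const x y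
    · intro x y
      have h := h₃ (x + y) y
      rw [← sub_self y] at h
      have := h.comp_sub_const y y
      have e : (fun s => f (x + s, s)) = fun s => f (x + y + (s - y), y + (s - y)) := by
        funext s; congr 2 <;> ring
      simp only [e]
      exact this
  have h2 := this.comp (f := fun p : Pt => (p.1 - p.2, p.2)) (by fun_prop)
  convert h2 using 1
  ext p; simp

lemma cd23 {k : ℕ} {f g₂ g₃ : Pt → ℝ}
    (h₂ : ∀ x y, HasDerivAt (fun s => f (x, s)) (g₂ (x, y)) y)
    (h₃ : ∀ x y, HasDerivAt (fun s => f (x + s, y + s)) (g₃ (x, y)) 0)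
    (c₂ : ContDiff ℝ k g₂) (c₃ : ContDiff ℝ k g₃) : ContDiff ℝ ((k + 1 : ℕ)) f := by
  have := cd13 (f := fun p => f (p.2, p.1)) (g₁ := fun p => g₂ (p.2, p.1))
    (g₃ := fun p => g₃ (p.2, p.1)) (fun x y => h₂ y x) (fun x y => h₃ y x)
    (c₂.comp (by fun_prop)) (c₃.comp (by fun_prop))
  exact this.comp (f := fun p : Pt => (p.2, p.1)) (by fun_prop)

/-! ### The cone spline -/

/-- normalized monomial -/
def mono (k : ℕ) (z : ℝ) : ℝ := z ^ k / (k.factorial : ℝ)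

/-- truncated normalized monomial -/
def tpow (k : ℕ) (z : ℝ) : ℝ := max z 0 ^ k / (k.factorial : ℝ)

/-- Family of successive antiderivatives from index `m` on. -/
def AD (φ : ℕ → ℝ → ℝ) (m : ℕ) : Prop :=
  (∀ k, m ≤ k → ∀ y, HasDerivAt (φ (k + 1)) (φ k y) y) ∧ ∀ k, m ≤ k → Continuous (φ k)

lemma mono_deriv (k : ℕ) (y : ℝ) : HasDerivAt (mono (k + 1)) (mono k y) y := by
  have := (hasDerivAt_pow (k + 1) y).div_const ((k + 1).factorial : ℝ)
  refine HasDerivAt.congr_deriv (f := mono (k + 1)) this ?_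
  unfold mono
  rw [Nat.factorial_succ, Nat.add_sub_cancel]
  have : (k.factorial : ℝ) ≠ 0 := by positivity
  push_cast
  field_simp

lemma mono_AD : AD mono 0 :=
  ⟨fun k _ y => mono_deriv k y, fun k _ => by unfold mono; fun_prop⟩

lemma tpow_of_nonneg (k : ℕ) {z : ℝ} (h : 0 ≤ z) : tpow k z = mono k z := by
  simp [tpow, mono, h]

lemma tpow_of_nonpos (k : ℕ) (hk : 1 ≤ k) {z : ℝ} (h : z ≤ 0) : tpow k z = 0 := by
  have : k ≠ 0 := by omega
  simp [tpow, h, this]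

lemma glue_deriv {f g : ℝ → ℝ} {d a x : ℝ} (hf : HasDerivAt f d x) (hg : HasDerivAt g d x)
    (hx : x = a) (hfg : f a = g a) :
    HasDerivAt (fun s => if a ≤ s then f s else g s) d x := by
  subst hx
  have h1 : HasDerivWithinAt (fun s => if x ≤ s then f s else g s) d (Ici x) x :=
    hf.hasDerivWithinAt.congr (fun s hs => by simp [mem_Ici.1 hs]) (by simp)
  have h2 : HasDerivWithinAt (fun s => if x ≤ s then f s else g s) d (Iic x) x := by
    refine hg.hasDerivWithinAt.congr (fun s hs => ?_) (by simp [hfg])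
    rcases eq_or_lt_of_le (mem_Iic.1 hs) with h | h
    · subst h; simp [hfg]
    · simp [not_le.2 h]
  have := h1.union h2
  rwa [Ici_union_Iic, hasDerivWithinAt_univ] at this

lemma glue_deriv' {f g : ℝ → ℝ} {d₁ d₂ a x : ℝ} (hf : HasDerivAt f d₁ x) (hg : HasDerivAt g d₂ x)
    (hfg : f a = g a) (hd : x = a → d₁ = d₂) :
    HasDerivAt (fun s => if a ≤ s then f s else g s) (if a ≤ x then d₁ else d₂) x := by
  rcases lt_trichotomy x a with h | h | h
  · rw [if_neg (not_le.2 h)]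
    refine hg.congr_of_eventuallyEq ?_
    filter_upwards [gt_mem_nhds h] with s hs
    simp [not_le.2 hs]
  · rw [if_pos h.ge]
    exact glue_deriv hf (hd h ▸ hg) h hfg
  · rw [if_pos h.le]
    refine hf.congr_of_eventuallyEq ?_
    filter_upwards [lt_mem_nhds h] with s hs
    simp [hs.le]

lemma tpow_deriv (k : ℕ) (hk : 1 ≤ k) (y : ℝ) : HasDerivAt (tpow (k + 1)) (tpow k y) y := by
  have e : ∀ j, 1 ≤ j → tpow j = fun s => if 0 ≤ s then mono j s else 0 := by
    intro j hj; ext s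
    split_ifs with h
    · exact tpow_of_nonneg _ h
    · exact tpow_of_nonpos _ hj (not_le.1 h).le
  rw [e (k + 1) (by omega), e k hk]
  refine glue_deriv' (mono_deriv k y) (hasDerivAt_const _ _) (by simp [mono]) ?_
  rintro rfl
  have : k ≠ 0 := by omega
  simp [mono, this]

lemma tpow_AD : AD tpow 1 :=
  ⟨fun k hk y => tpow_deriv k hk y, fun k _ => by unfold tpow; fun_prop⟩

lemma tpow_contDiff (k : ℕ) : ∀ j, k + 1 ≤ j → ContDiff ℝ k (tpow j) := by
  induction k with
  | zero => intro j hj; exact contDiff_zero.2 (tpow_AD.2 j (by omega))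
  | succ k ih =>
    intro j hj
    obtain ⟨j, rfl⟩ : ∃ i, j = i + 1 := ⟨j - 1, by omega⟩
    have : ContDiff ℝ ((k : WithTop ℕ∞) + 1) (tpow (j + 1)) := by
      rw [contDiff_succ_iff_deriv]
      refine ⟨fun y => (tpow_deriv j (by omega) y).differentiableAt, by simp, ?_⟩
      rw [show deriv (tpow (j + 1)) = tpow j from
        funext fun y => (tpow_deriv j (by omega) y).deriv]
      exact ih j (by omega)
    exact_mod_cast this

lemma mono_contDiff (k : ℕ) (n : WithTop ℕ∞) : ContDiff ℝ n (mono k) := by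
  unfold mono; fun_prop

/-- One piece of the cone spline. -/
def cQ (φ : ℕ → ℝ → ℝ) (A B c : ℕ) (x y : ℝ) : ℝ :=
  ∑ ij ∈ Finset.HasAntidiagonal.antidiagonal A,
    ((B + ij.2).choose ij.2 : ℝ) * mono ij.1 (x - y) * φ (B + c + ij.2) y

lemma cQ_d1 (φ : ℕ → ℝ → ℝ) (A B c : ℕ) (x y : ℝ) :
    HasDerivAt (fun s => cQ φ (A + 1) B c s y) (cQ φ A B c x y) x := by
  unfold cQ
  simp only [Finset.Nat.sum_antidiagonal_succ]
  have h := (HasDerivAt.fun_sum (u := Finset.HasAntidiagonal.antidiagonal A) fun ij _ =>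
    (((mono_deriv ij.1 (x - y)).comp_sub_const x y).const_mul
      ((B + ij.2).choose ij.2 : ℝ)).mul_const (φ (B + c + ij.2) y)).const_add
      (((B + (A + 1)).choose (A + 1) : ℝ) * mono 0 0 * φ (B + c + (A + 1)) y)
  have m0 : ∀ z, mono 0 z = 1 := fun z => by simp [mono]
  simp only [m0] at h ⊢
  exact h

lemma cQ_d3 {φ : ℕ → ℝ → ℝ} {m : ℕ} (hφ : AD φ m) (A B c : ℕ) (hc : m ≤ c) (x y : ℝ) :
    HasDerivAt (fun s => cQ φ A B (c + 1) (x + s) (y + s)) (cQ φ A B c x y) 0 := by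
  unfold cQ
  refine HasDerivAt.fun_sum fun ij _ => ?_
  simp only [add_sub_add_right_eq_sub]
  refine HasDerivAt.const_mul _ ?_
  have h := hφ.1 (B + c + ij.2) (by omega) (y + 0)
  have := h.comp_const_add y 0
  rw [show B + (c + 1) + ij.2 = B + c + ij.2 + 1 by ring]
  simpa using this

lemma cQ_d2 {φ : ℕ → ℝ → ℝ} {m : ℕ} (hφ : AD φ m) (A B c : ℕ) (hc : m ≤ c) (x y : ℝ) :
    HasDerivAt (fun s => cQ φ A (B + 1) c x s) (cQ φ A B c x y) y := by
  have hφ' : ∀ j, HasDerivAt (φ (B + 1 + c + j)) (φ (B + c + j) y) y := fun j => by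
    have := hφ.1 (B + c + j) (by omega) y
    rwa [show B + 1 + c + j = B + c + j + 1 by ring]
  have hm : ∀ i, HasDerivAt (fun s => mono (i + 1) (x - s)) (-mono i (x - y)) y := fun i => by
    simpa using (mono_deriv i (x - y)).comp_const_sub x y
  rcases A with _ | A
  · simp only [cQ, Finset.Nat.antidiagonal_zero, Finset.sum_singleton]
    have := hφ' 0
    simpa [mono] using this
  · have h : HasDerivAt (fun s => cQ φ (A + 1) (B + 1) c x s)
        (∑ ij ∈ Finset.HasAntidiagonal.antidiagonal (A + 1),
          ((B + 1 + ij.2).choose ij.2 : ℝ) * mono ij.1 (x - y) * φ (B + c + ij.2) y +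
        ∑ ij ∈ Finset.HasAntidiagonal.antidiagonal A,
          ((B + 1 + ij.2).choose ij.2 : ℝ) * (- mono ij.1 (x - y)) * φ (B + 1 + c + ij.2) y) y := by
      unfold cQ
      simp only [Finset.Nat.sum_antidiagonal_succ]
      rw [add_assoc (_ * _ * _), ← Finset.sum_add_distrib]
      refine HasDerivAt.add ?_ (HasDerivAt.fun_sum fun ij _ => ?_)
      · have := (hφ' (A + 1)).const_mul (((B + 1 + (A + 1)).choose (A + 1) : ℝ))
        simpa [mono] using this
      · have := ((hm ij.1).const_mul ((B + 1 + ij.2).choose ij.2 : ℝ)).mul (hφ' ij.2)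
        refine this.congr_deriv ?_
        ring
    refine h.congr_deriv ?_
    symm
    unfold cQ
    rw [Finset.Nat.sum_antidiagonal_succ', Finset.Nat.sum_antidiagonal_succ']
    simp only [Nat.choose_zero_right, add_assoc]
    rw [← Finset.sum_add_distrib]
    congr 1
    refine Finset.sum_congr rfl fun ij _ => ?_
    have e : ((B + (1 + (ij.2 + 1))).choose (ij.2 + 1) : ℝ) =
        ((B + (1 + ij.2)).choose ij.2 : ℝ) + ((B + (ij.2 + 1)).choose (ij.2 + 1) : ℝ) := by
      rw [show B + (1 + (ij.2 + 1)) = (B + (1 + ij.2)) + 1 by ring, Nat.choose_succ_succ,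
        show B + (1 + ij.2) = B + (ij.2 + 1) by ring]
      push_cast; ring
    rw [e, show B + (1 + (c + ij.2)) = B + (c + (ij.2 + 1)) by ring]
    ring

lemma cQ_diag (φ : ℕ → ℝ → ℝ) (A B c : ℕ) (x : ℝ) :
    cQ φ A B c x x = ((B + A).choose A : ℝ) * φ (B + c + A) x := by
  unfold cQ
  rw [Finset.sum_eq_single (0, A)]
  · simp [mono]
  · rintro ⟨i, j⟩ h1 h2
    have : i ≠ 0 := by
      rintro rfl
      simp at h1; simp [h1] at h2
    simp [mono, this]
  · simp

lemma cQ_diag_symm (φ : ℕ → ℝ → ℝ) (A B c : ℕ) (x : ℝ) :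
    cQ φ A B c x x = cQ φ B A c x x := by
  rw [cQ_diag, cQ_diag, add_comm A B, Nat.choose_symm_add,
    show B + c + A = A + c + B by ring]

/-- The cone spline. -/
def cT (φ : ℕ → ℝ → ℝ) (A B c : ℕ) (p : Pt) : ℝ :=
  if p.2 ≤ p.1 then cQ φ A B c p.1 p.2 else cQ φ B A c p.2 p.1

lemma cT_swap (φ : ℕ → ℝ → ℝ) (A B c : ℕ) (x y : ℝ) :
    cT φ A B c (x, y) = cT φ B A c (y, x) := by
  unfold cT
  rcases lt_trichotomy x y with h | h | h
  · simp [h.le, not_le.2 h]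
  · subst h; simp [cQ_diag_symm φ A B]
  · simp [h.le, not_le.2 h]

lemma cT_d1 {φ : ℕ → ℝ → ℝ} {m : ℕ} (hφ : AD φ m) (A B c : ℕ) (hc : m ≤ c) (x y : ℝ) :
    HasDerivAt (fun s => cT φ (A + 1) B c (s, y)) (cT φ A B c (x, y)) x := by
  unfold cT
  refine glue_deriv' (cQ_d1 φ A B c x y) (cQ_d2 hφ B A c hc y x) ?_ ?_
  · exact cQ_diag_symm _ _ _ _ _
  · intro h
    simp only at h
    simp only [h]
    exact cQ_diag_symm _ _ _ _ _

lemma cT_d2 {φ : ℕ → ℝ → ℝ} {m : ℕ} (hφ : AD φ m) (A B c : ℕ) (hc : m ≤ c) (x y : ℝ) :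
    HasDerivAt (fun s => cT φ A (B + 1) c (x, s)) (cT φ A B c (x, y)) y := by
  simp only [cT_swap φ A]
  exact cT_d1 hφ B A c hc y x

lemma cT_d3 {φ : ℕ → ℝ → ℝ} {m : ℕ} (hφ : AD φ m) (A B c : ℕ) (hc : m ≤ c) (x y : ℝ) :
    HasDerivAt (fun s => cT φ A B (c + 1) (x + s, y + s)) (cT φ A B c (x, y)) 0 := by
  unfold cT
  simp only [add_le_add_iff_right]
  split_ifs
  · exact cQ_d3 hφ A B c hc x y
  · exact cQ_d3 hφ B A c hc y x

lemma cQ_cont {φ : ℕ → ℝ → ℝ} {m : ℕ} (hφ : AD φ m) (A B c : ℕ) (hc : m ≤ c) :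
    Continuous (fun p : Pt => cQ φ A B c p.1 p.2) := by
  unfold cQ
  refine continuous_finsetSum _ fun ij _ => ?_
  refine (continuous_const.mul ?_).mul ?_
  · exact (mono_contDiff ij.1 0).continuous.comp (by fun_prop)
  · exact (hφ.2 _ (by omega)).comp continuous_snd

lemma cT_cont {φ : ℕ → ℝ → ℝ} {m : ℕ} (hφ : AD φ m) (A B c : ℕ) (hc : m ≤ c) :
    Continuous (cT φ A B c) := by
  unfold cT
  refine Continuous.if_le (cQ_cont hφ A B c hc)
    ((cQ_cont hφ B A c hc).comp (continuous_snd.prodMk continuous_fst))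
    continuous_snd continuous_fst ?_
  intro p h
  simp only [h]
  exact cQ_diag_symm _ _ _ _ _

lemma cT_global (r : ℕ) : ∀ A B C : ℕ, r ≤ A + B → r ≤ A + C → r ≤ B + C →
    ContDiff ℝ r (cT tpow A B (C + 1)) := by
  induction r with
  | zero => intro A B C _ _ _; exact contDiff_zero.2 (cT_cont tpow_AD _ _ _ (by omega))
  | succ r ih =>
    intro A B C h1 h2 h3
    rcases A with _ | A
    · obtain ⟨B, rfl⟩ : ∃ i, B = i + 1 := ⟨B - 1, by omega⟩
      obtain ⟨C, rfl⟩ : ∃ i, C = i + 1 := ⟨C - 1, by omega⟩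
      exact cd23 (cT_d2 tpow_AD _ _ _ (by omega)) (cT_d3 tpow_AD _ _ _ (by omega))
        (ih _ _ _ (by omega) (by omega) (by omega)) (ih _ _ _ (by omega) (by omega) (by omega))
    · rcases B with _ | B
      · obtain ⟨C, rfl⟩ : ∃ i, C = i + 1 := ⟨C - 1, by omega⟩
        exact cd13 (cT_d1 tpow_AD _ _ _ (by omega)) (cT_d3 tpow_AD _ _ _ (by omega))
          (ih _ _ _ (by omega) (by omega) (by omega)) (ih _ _ _ (by omega) (by omega) (by omega))
      · exact cd12 (cT_d1 tpow_AD _ _ _ (by omega)) (cT_d2 tpow_AD _ _ _ (by omega))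
          (ih _ _ _ (by omega) (by omega) (by omega)) (ih _ _ _ (by omega) (by omega) (by omega))

lemma cQ_mono_zero (A B : ℕ) (x y : ℝ) : cQ mono A B 0 x y = mono A x * mono B y := by
  unfold cQ mono
  have h := (Commute.all (x - y) y).add_pow' A
  rw [sub_add_cancel] at h
  rw [h, Finset.sum_div, Finset.sum_mul]
  refine Finset.sum_congr rfl fun ij hij => ?_
  have hA : ij.1 + ij.2 = A := Finset.HasAntidiagonal.mem_antidiagonal.1 hij
  subst hA
  rw [nsmul_eq_mul]
  have e1 := Nat.add_choose_mul_factorial_mul_factorial ij.1 ij.2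
  have e2 := Nat.add_choose_mul_factorial_mul_factorial B ij.2
  have e1' : ((ij.1 + ij.2).choose ij.2 : ℝ) * ij.1.factorial * ij.2.factorial
    = (ij.1 + ij.2).factorial := by exact_mod_cast e1
  have e2' : ((B + ij.2).choose ij.2 : ℝ) * B.factorial * ij.2.factorial
    = (B + ij.2).factorial := by exact_mod_cast e2
  rw [Nat.choose_symm_add, add_zero, ← e1', ← e2']
  have p1 : ((ij.1 + ij.2).choose ij.2 : ℝ) ≠ 0 := by
    exact_mod_cast (Nat.choose_pos (Nat.le_add_left _ _)).ne'
  have p2 : ((B + ij.2).choose ij.2 : ℝ) ≠ 0 := by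
    exact_mod_cast (Nat.choose_pos (Nat.le_add_left _ _)).ne'
  have p3 : (ij.1.factorial : ℝ) ≠ 0 := by positivity
  have p4 : (ij.2.factorial : ℝ) ≠ 0 := by positivity
  have p5 : (B.factorial : ℝ) ≠ 0 := by positivity
  field_simp
  try ring

lemma cT_diag_smooth (r : ℕ) : ∀ c A B : ℕ, r ≤ A + B → ContDiff ℝ r (cT mono A B c) := by
  induction r with
  | zero => intro c A B _; exact contDiff_zero.2 (cT_cont mono_AD _ _ _ (by omega))
  | succ r ih =>
    intro c
    induction c with
    | zero =>
      intro A B _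
      have : cT mono A B 0 = fun p : Pt => mono A p.1 * mono B p.2 := by
        ext p
        simp only [cT, cQ_mono_zero, mul_comm, ite_self]
      rw [this]
      unfold mono
      fun_prop
    | succ c ihc =>
      intro A B h
      have h3 : ContDiff ℝ r (cT mono A B c) := (ihc A B h).of_le (by exact_mod_cast (by omega))
      rcases A with _ | A
      · obtain ⟨B, rfl⟩ : ∃ i, B = i + 1 := ⟨B - 1, by omega⟩
        exact cd23 (cT_d2 mono_AD _ _ _ (by omega)) (cT_d3 mono_AD _ _ _ (by omega))
          (ih _ _ _ (by omega)) h3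
      · exact cd13 (cT_d1 mono_AD _ _ _ (by omega)) (cT_d3 mono_AD _ _ _ (by omega))
          (ih _ _ _ (by omega)) h3

lemma cQ_smooth (A B C : ℕ) :
    ContDiff ℝ ((B + C : ℕ)) (fun p : Pt => cQ tpow A B (C + 1) p.1 p.2) := by
  unfold cQ
  refine ContDiff.sum fun ij _ => ?_
  refine (contDiff_const.mul ?_).mul ?_
  · exact (mono_contDiff ij.1 _).comp (by fun_prop)
  · exact (tpow_contDiff (B + C) _ (by omega)).comp contDiff_snd

/-! ### Differences and convolutions -/

/-- backward difference -/
def nab (w : ℤ × ℤ) (f : Pt → ℝ) (p : Pt) : ℝ := f p - f (p.1 - (w.1 : ℝ), p.2 - (w.2 : ℝ))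

/-- directional convolution -/
def cnv (w : ℤ × ℤ) (f : Pt → ℝ) (p : Pt) : ℝ :=
  ∫ t in (0:ℝ)..1, f (p.1 - t * (w.1 : ℝ), p.2 - t * (w.2 : ℝ))

lemma nab_cont (w : ℤ × ℤ) {f : Pt → ℝ} (hf : Continuous f) : Continuous (nab w f) := by
  unfold nab; fun_prop

lemma nab_comm (v w : ℤ × ℤ) : Function.Commute (nab v) (nab w) := by
  intro f; funext p
  simp only [nab, sub_sub, add_comm]
  ring

lemma cnv_nab (v w : ℤ × ℤ) {f : Pt → ℝ} (hf : Continuous f) :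
    cnv w (nab v f) = nab v (cnv w f) := by
  funext p
  simp only [nab, cnv]
  rw [intervalIntegral.integral_sub]
  · congr 1
    refine intervalIntegral.integral_congr fun t _ => ?_
    simp only [sub_right_comm]
  · exact Continuous.intervalIntegrable (by fun_prop) _ _
  · exact Continuous.intervalIntegrable (by fun_prop) _ _

lemma nab_iter_cont (w : ℤ × ℤ) (n : ℕ) {f : Pt → ℝ} (hf : Continuous f) :
    Continuous ((nab w)^[n] f) := by
  induction n with
  | zero => exact hf
  | succ n ih => rw [Function.iterate_succ_apply']; exact nab_cont w ih

lemma cnv_iter (v w : ℤ × ℤ) (n : ℕ) {f : Pt → ℝ} (hf : Continuous f) :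
    cnv w ((nab v)^[n] f) = (nab v)^[n] (cnv w f) := by
  induction n with
  | zero => rfl
  | succ n ih =>
    rw [Function.iterate_succ_apply', Function.iterate_succ_apply',
      cnv_nab _ _ (nab_iter_cont v n hf), ih]

/-- all the differences -/
def Nab (a b c : ℕ) (f : Pt → ℝ) : Pt → ℝ :=
  (nab (1, 0))^[a] ((nab (0, 1))^[b] ((nab (1, 1))^[c] f))

lemma cnv_Nab (w : ℤ × ℤ) (a b c : ℕ) {f : Pt → ℝ} (hf : Continuous f) :
    cnv w (Nab a b c f) = Nab a b c (cnv w f) := by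
  unfold Nab
  rw [cnv_iter, cnv_iter, cnv_iter _ _ _ hf]
  · exact nab_iter_cont _ _ hf
  · exact nab_iter_cont _ _ (nab_iter_cont _ _ hf)

lemma Nab_1 (a b c : ℕ) (f : Pt → ℝ) : Nab a b c (nab (1, 0) f) = Nab (a + 1) b c f := by
  unfold Nab
  rw [(nab_comm (1, 1) (1, 0)).iterate_left c f, (nab_comm (0, 1) (1, 0)).iterate_left b,
    Function.iterate_succ_apply]

lemma Nab_2 (a b c : ℕ) (f : Pt → ℝ) : Nab a b c (nab (0, 1) f) = Nab a (b + 1) c f := by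
  unfold Nab
  rw [(nab_comm (1, 1) (0, 1)).iterate_left c f, Function.iterate_succ_apply]

lemma Nab_3 (a b c : ℕ) (f : Pt → ℝ) : Nab a b c (nab (1, 1) f) = Nab a b (c + 1) f := by
  unfold Nab
  rw [Function.iterate_succ_apply]

lemma Nab_closed (P : (Pt → ℝ) → Prop) (hP : ∀ w f, P f → P (nab w f)) (a b c : ℕ)
    {f : Pt → ℝ} (hf : P f) : P (Nab a b c f) := by
  have key : ∀ w n f, P f → P ((nab w)^[n] f) := by
    intro w n
    induction n with
    | zero => intro f hf; exact hf
    | succ n ih => intro f hf; rw [Function.iterate_succ_apply']; exact hP _ _ (ih f hf)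
  exact key _ _ _ (key _ _ _ (key _ _ _ hf))

lemma cnv_eq_nab (w : ℤ × ℤ) {F g : Pt → ℝ} (hg : Continuous g)
    (h : ∀ x y, HasDerivAt (fun s => F (x + s * (w.1 : ℝ), y + s * (w.2 : ℝ))) (g (x, y)) 0) :
    cnv w g = nab w F := by
  funext p
  simp only [cnv, nab]
  have hd : ∀ t ∈ uIcc (0:ℝ) 1, HasDerivAt
      (fun t => - F (p.1 - t * (w.1 : ℝ), p.2 - t * (w.2 : ℝ)))
      (g (p.1 - t * (w.1 : ℝ), p.2 - t * (w.2 : ℝ))) t := by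
    intro t _
    have h1 := h (p.1 - t * (w.1 : ℝ)) (p.2 - t * (w.2 : ℝ))
    rw [← sub_self t] at h1
    have h2 := (h1.comp_const_sub t t).neg
    have e : (fun t => - F (p.1 - t * (w.1 : ℝ), p.2 - t * (w.2 : ℝ))) =
      fun s => - F (p.1 - t * (w.1 : ℝ) + (t - s) * (w.1 : ℝ),
        p.2 - t * (w.2 : ℝ) + (t - s) * (w.2 : ℝ)) := by
      funext s; congr 3 <;> ring
    rw [e]
    refine HasDerivAt.congr_deriv h2 ?_
    simp
  rw [intervalIntegral.integral_eq_sub_of_hasDerivAt hd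
    (Continuous.intervalIntegrable (by fun_prop) _ _)]
  simp
  ring

lemma cnv_cT1 (A B C : ℕ) :
    cnv (1, 0) (cT tpow A B (C + 1)) = nab (1, 0) (cT tpow (A + 1) B (C + 1)) := by
  refine cnv_eq_nab _ (cT_cont tpow_AD _ _ _ (by omega)) fun x y => ?_
  have h := cT_d1 tpow_AD A B (C + 1) (by omega) (x + 0) y
  have := h.comp_const_add x 0
  simpa using this

lemma cnv_cT2 (A B C : ℕ) :
    cnv (0, 1) (cT tpow A B (C + 1)) = nab (0, 1) (cT tpow A (B + 1) (C + 1)) := by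
  refine cnv_eq_nab _ (cT_cont tpow_AD _ _ _ (by omega)) fun x y => ?_
  have h := cT_d2 tpow_AD A B (C + 1) (by omega) x (y + 0)
  have := h.comp_const_add y 0
  simpa using this

lemma cnv_cT3 (A B C : ℕ) :
    cnv (1, 1) (cT tpow A B (C + 1)) = nab (1, 1) (cT tpow A B (C + 1 + 1)) := by
  refine cnv_eq_nab _ (cT_cont tpow_AD _ _ _ (by omega)) fun x y => ?_
  simpa using cT_d3 tpow_AD A B (C + 1) (by omega) x y

lemma cT_base (p : Pt) : cT tpow 0 0 1 p = max (min p.1 p.2) 0 := by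
  unfold cT cQ
  split_ifs with h
  · simp [mono, tpow, h]
  · simp [mono, tpow, (not_le.1 h).le]

lemma hat_val (x y : ℝ) : hat (x, y) =
    max (min x y) 0 - max (min (x - 1) y) 0 - max (min x (y - 1)) 0
      + max (min (x - 2) (y - 1)) 0 + max (min (x - 1) (y - 2)) 0
      - max (min (x - 2) (y - 2)) 0 := by
  unfold hat
  simp only
  grind

lemma boxN_eq (A B C : ℕ) :
    boxN (A + 1) (B + 1) (C + 1) = Nab (A + 1) (B + 1) (C + 1) (cT tpow A B (C + 1)) := by
  have hc : ∀ A B C, Continuous (cT tpow A B (C + 1)) := fun A B C =>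
    cT_cont tpow_AD _ _ _ (by omega)
  induction A with
  | succ A ih =>
    have : boxN (A + 1 + 1) (B + 1) (C + 1) = cnv (1, 0) (boxN (A + 1) (B + 1) (C + 1)) := by
      funext p; rw [boxN]; simp [cnv]
    rw [this, ih, cnv_Nab _ _ _ _ (hc _ _ _), cnv_cT1, Nab_1]
  | zero =>
    induction B with
    | succ B ih =>
      have : boxN (0 + 1) (B + 1 + 1) (C + 1) = cnv (0, 1) (boxN (0 + 1) (B + 1) (C + 1)) := by
        funext p; rw [boxN]; simp [cnv]
      rw [this, ih, cnv_Nab _ _ _ _ (hc _ _ _), cnv_cT2, Nab_2]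
    | zero =>
      induction C with
      | succ C ih =>
        have : boxN (0 + 1) (0 + 1) (C + 1 + 1) = cnv (1, 1) (boxN (0 + 1) (0 + 1) (C + 1)) := by
          funext p; rw [boxN]; simp [cnv]
        rw [this, ih, cnv_Nab _ _ _ _ (hc _ _ _), cnv_cT3, Nab_3]
      | zero =>
        funext p
        rw [boxN]
        simp only [Nab, Function.iterate_succ, Function.iterate_zero, Function.comp, id, nab,
          zero_add, cT_base]
        rw [hat_val]
        norm_num [sub_sub]
        ring

/-! ### Polynomial functions -/

/-- Functions given by polynomials of total degree at most `N`. -/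
def PolyFun (N : ℕ) (f : Pt → ℝ) : Prop := ∃ q : BPoly, q.totalDegree ≤ N ∧ ∀ p, f p = evalP q p

lemma PolyFun.mk_le {N M : ℕ} {f : Pt → ℝ} (hf : PolyFun N f) (h : N ≤ M) : PolyFun M f := by
  obtain ⟨q, h1, h2⟩ := hf
  exact ⟨q, h1.trans h, h2⟩

lemma polyFun_const (c : ℝ) : PolyFun 0 (fun _ => c) :=
  ⟨C c, by simp, fun p => by simp [evalP]⟩

lemma polyFun_fst : PolyFun 1 (fun p => p.1) := ⟨X 0, by simp, fun p => by simp [evalP]⟩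

lemma polyFun_snd : PolyFun 1 (fun p => p.2) := ⟨X 1, by simp, fun p => by simp [evalP]⟩

lemma PolyFun.sub {N : ℕ} {f g : Pt → ℝ} (hf : PolyFun N f) (hg : PolyFun N g) :
    PolyFun N (fun p => f p - g p) := by
  obtain ⟨q, h1, h2⟩ := hf
  obtain ⟨r, h3, h4⟩ := hg
  exact ⟨q - r, (totalDegree_sub _ _).trans (max_le h1 h3), fun p => by
    simp [evalP, h2, h4]⟩

lemma PolyFun.add {N : ℕ} {f g : Pt → ℝ} (hf : PolyFun N f) (hg : PolyFun N g) :
    PolyFun N (fun p => f p + g p) := by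
  obtain ⟨q, h1, h2⟩ := hf
  obtain ⟨r, h3, h4⟩ := hg
  exact ⟨q + r, (totalDegree_add _ _).trans (max_le h1 h3), fun p => by
    simp [evalP, h2, h4]⟩

lemma PolyFun.mul {N M : ℕ} {f g : Pt → ℝ} (hf : PolyFun N f) (hg : PolyFun M g) :
    PolyFun (N + M) (fun p => f p * g p) := by
  obtain ⟨q, h1, h2⟩ := hf
  obtain ⟨r, h3, h4⟩ := hg
  exact ⟨q * r, (totalDegree_mul _ _).trans (add_le_add h1 h3), fun p => by
    simp [evalP, h2, h4]⟩

lemma PolyFun.pow {f : Pt → ℝ} (hf : PolyFun 1 f) (k : ℕ) :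
    PolyFun k (fun p => f p ^ k) := by
  induction k with
  | zero => simpa using polyFun_const 1
  | succ k ih => simpa only [pow_succ] using ih.mul hf

lemma PolyFun.sum {N : ℕ} {ι : Type*} (s : Finset ι) (f : ι → Pt → ℝ)
    (h : ∀ i ∈ s, PolyFun N (f i)) : PolyFun N (fun p => ∑ i ∈ s, f i p) := by
  classical
  induction s using Finset.induction_on with
  | empty => simpa using (polyFun_const 0).mk_le (Nat.zero_le N)
  | insert a s ha ih =>
    simp only [Finset.sum_insert ha]
    exact (h a (by simp)).add (ih fun i hi => h i (by simp [hi]))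

lemma PolyFun.mono {f : Pt → ℝ} (hf : PolyFun 1 f) (k : ℕ) :
    PolyFun k (fun p => mono k (f p)) := by
  have := (hf.pow k).mul (polyFun_const ((k.factorial : ℝ)⁻¹))
  simpa only [_root_.mono, div_eq_mul_inv, add_zero] using this

lemma PolyFun.comp {N : ℕ} {f u v : Pt → ℝ} (hf : PolyFun N f) (hu : PolyFun 1 u)
    (hv : PolyFun 1 v) : PolyFun N (fun p => f (u p, v p)) := by
  obtain ⟨q, h1, h2⟩ := hf
  have e : (fun p => f (u p, v p)) = fun p => ∑ d ∈ q.support,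
      q.coeff d * (u p ^ d 0 * v p ^ d 1) := by
    funext p
    rw [h2, evalP, eval_eq']
    simp [Fin.prod_univ_two]
  rw [e]
  refine PolyFun.sum _ _ fun d hd => ?_
  have h3 := (polyFun_const (q.coeff d)).mul ((hu.pow (d 0)).mul (hv.pow (d 1)))
  refine h3.mk_le ?_
  have := le_totalDegree hd
  rw [Finsupp.sum_fintype _ _ (by simp), Fin.sum_univ_two] at this
  omega

lemma polyFun_cQ (A B c : ℕ) {u v : Pt → ℝ} (hu : PolyFun 1 u) (hv : PolyFun 1 v) :
    PolyFun (A + B + c) (fun p => cQ mono A B c (u p) (v p)) := by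
  unfold cQ
  refine PolyFun.sum _ _ fun ij hij => ?_
  have hA : ij.1 + ij.2 = A := Finset.HasAntidiagonal.mem_antidiagonal.1 hij
  refine (((polyFun_const _).mul ((hu.sub hv).mono ij.1)).mul (hv.mono _)).mk_le ?_
  omega

/-! ### Pieces of the cone spline -/

lemma cT_le (φ : ℕ → ℝ → ℝ) (A B c : ℕ) {p : Pt} (h : p.2 ≤ p.1) :
    cT φ A B c p = cQ φ A B c p.1 p.2 := by simp [cT, h]

lemma cT_ge (φ : ℕ → ℝ → ℝ) (A B c : ℕ) {p : Pt} (h : p.1 ≤ p.2) :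
    cT φ A B c p = cQ φ B A c p.2 p.1 := by
  rw [show p = (p.1, p.2) from rfl, cT_swap, cT_le _ _ _ _ h]

lemma cQ_pos (A B c : ℕ) (x : ℝ) {y : ℝ} (h : 0 ≤ y) :
    cQ tpow A B c x y = cQ mono A B c x y := by
  simp only [cQ, tpow_of_nonneg _ h]

lemma cQ_neg (A B C : ℕ) (x : ℝ) {y : ℝ} (h : y ≤ 0) : cQ tpow A B (C + 1) x y = 0 := by
  unfold cQ
  refine Finset.sum_eq_zero fun ij _ => ?_
  rw [tpow_of_nonpos _ (by omega) h, mul_zero]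

/-- In a unit strip, the piece is a polynomial. -/
lemma cQ_strip (A B C : ℕ) (l : ℤ) {u v : Pt → ℝ} (hu : PolyFun 1 u) (hv : PolyFun 1 v) :
    ∃ g, PolyFun (A + B + C + 1) g ∧ ∀ p, (l : ℝ) ≤ v p → v p ≤ l + 1 →
      cQ tpow A B (C + 1) (u p) (v p) = g p := by
  rcases le_or_gt 0 l with h | h
  · refine ⟨_, polyFun_cQ A B (C + 1) hu hv, fun p h1 _ => ?_⟩
    have : (0 : ℝ) ≤ l := by exact_mod_cast h
    exact cQ_pos _ _ _ _ (by linarith)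
  · refine ⟨_, (polyFun_const 0).mk_le (Nat.zero_le _), fun p _ h1 => ?_⟩
    have : (l : ℝ) + 1 ≤ 0 := by exact_mod_cast h
    exact cQ_neg _ _ _ _ (by linarith)

lemma PolyFun.contDiff {N : ℕ} {f : Pt → ℝ} (hf : PolyFun N f) (n : WithTop ℕ∞) :
    ContDiff ℝ n f := by
  obtain ⟨q, -, h⟩ := hf
  have e : f = fun p => ∑ d ∈ q.support, q.coeff d * (p.1 ^ d 0 * p.2 ^ d 1) := by
    funext p
    rw [h, evalP, eval_eq']
    simp [Fin.prod_univ_two]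
  rw [e]
  fun_prop

/-- Closed diamonds. -/
def Dm (v : ℤ × ℤ) : Fin 3 → Set Pt :=
  ![{p | (v.1 : ℝ) ≤ p.1 ∧ p.1 ≤ v.1 + 1 ∧ (v.1 : ℝ) - v.2 ≤ p.1 - p.2 ∧
      p.1 - p.2 ≤ (v.1 : ℝ) - v.2 + 1},
    {p | (v.2 : ℝ) ≤ p.2 ∧ p.2 ≤ v.2 + 1 ∧ (v.2 : ℝ) - v.1 ≤ p.2 - p.1 ∧
      p.2 - p.1 ≤ (v.2 : ℝ) - v.1 + 1},
    {p | (v.1 : ℝ) ≤ p.1 ∧ p.1 ≤ v.1 + 1 ∧ (v.2 : ℝ) ≤ p.2 ∧ p.2 ≤ v.2 + 1}]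

/-- Smoothness of order `d` on the closed diamonds of type `i`. -/
def PE (i : Fin 3) (d : ℕ) (f : Pt → ℝ) : Prop :=
  ∀ v : ℤ × ℤ, ∃ g : Pt → ℝ, ContDiff ℝ d g ∧ EqOn f g (Dm v i)

/-- Polynomial on every triangle. -/
def PT (N : ℕ) (f : Pt → ℝ) : Prop := ∀ T : Tri, ∃ g, PolyFun N g ∧ EqOn f g T.toSet

lemma PE_nab (i : Fin 3) (d : ℕ) (w : ℤ × ℤ) (f : Pt → ℝ) (hf : PE i d f) :
    PE i d (nab w f) := by
  intro v
  obtain ⟨g₁, h1, h2⟩ := hf v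
  obtain ⟨g₂, h3, h4⟩ := hf (v.1 - w.1, v.2 - w.2)
  refine ⟨fun p => g₁ p - g₂ (p.1 - (w.1 : ℝ), p.2 - (w.2 : ℝ)),
    h1.sub (h3.comp (by fun_prop)), fun p hp => ?_⟩
  simp only [nab]
  rw [h2 hp, h4]
  fin_cases i <;> simp [Dm] at hp ⊢ <;> (refine ⟨?_, ?_, ?_, ?_⟩ <;> linarith)

lemma PT_nab (N : ℕ) (w : ℤ × ℤ) (f : Pt → ℝ) (hf : PT N f) : PT N (nab w f) := by
  intro T
  obtain ⟨g₁, h1, h2⟩ := hf T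
  obtain ⟨g₂, h3, h4⟩ := hf ⟨(T.v.1 - w.1, T.v.2 - w.2), T.up⟩
  refine ⟨fun p => g₁ p - g₂ (p.1 - (w.1 : ℝ), p.2 - (w.2 : ℝ)),
    h1.sub (h3.comp (polyFun_fst.sub ((polyFun_const _).mk_le zero_le_one))
      (polyFun_snd.sub ((polyFun_const _).mk_le zero_le_one))), fun p hp => ?_⟩
  simp only [nab]
  rw [h2 hp, h4]
  obtain ⟨v, up⟩ := T
  cases up <;> simp [Tri.toSet] at hp ⊢ <;> (refine ⟨?_, ?_, ?_⟩ <;> linarith)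

lemma PE0_cT (A B C : ℕ) : PE 0 (B + C) (cT tpow A B (C + 1)) := by
  rintro ⟨k, l⟩
  rcases le_or_gt l k with h | h
  · refine ⟨_, cQ_smooth A B C, fun p hp => ?_⟩
    have h' : (l : ℝ) ≤ k := by exact_mod_cast h
    simp [Dm] at hp
    exact cT_le _ _ _ _ (by linarith)
  · have h' : (k : ℝ) + 1 ≤ l := by exact_mod_cast h
    obtain ⟨g, h1, h2⟩ := cQ_strip B A C k polyFun_snd polyFun_fst
    refine ⟨g, h1.contDiff _, fun p hp => ?_⟩
    simp [Dm] at hp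
    rw [cT_ge _ _ _ _ (by linarith)]
    exact h2 p hp.1 hp.2.1

lemma PE1_cT (A B C : ℕ) : PE 1 (A + C) (cT tpow A B (C + 1)) := by
  rintro ⟨k, l⟩
  obtain ⟨g, h1, h2⟩ := PE0_cT B A C (l, k)
  refine ⟨fun p => g (p.2, p.1), h1.comp (by fun_prop), fun p hp => ?_⟩
  rw [show p = (p.1, p.2) from rfl, cT_swap, h2]
  simpa [Dm] using hp

lemma PE2_cT (A B C : ℕ) : PE 2 (A + B) (cT tpow A B (C + 1)) := by
  rintro ⟨k, l⟩
  rcases lt_trichotomy l k with h | h | h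
  · have h' : (l : ℝ) + 1 ≤ k := by exact_mod_cast h
    obtain ⟨g, h1, h2⟩ := cQ_strip A B C l polyFun_fst polyFun_snd
    refine ⟨g, h1.contDiff _, fun p hp => ?_⟩
    simp [Dm] at hp
    rw [cT_le _ _ _ _ (by linarith)]
    exact h2 p hp.2.2.1 hp.2.2.2
  · subst h
    rcases le_or_gt 0 l with h | h
    · have h' : (0 : ℝ) ≤ l := by exact_mod_cast h
      refine ⟨_, cT_diag_smooth (A + B) (C + 1) A B le_rfl, fun p hp => ?_⟩
      simp [Dm] at hp
      simp only [cT]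
      rw [cQ_pos _ _ _ _ (by linarith), cQ_pos _ _ _ _ (by linarith)]
    · have h' : (l : ℝ) + 1 ≤ 0 := by exact_mod_cast h
      refine ⟨fun _ => 0, contDiff_const, fun p hp => ?_⟩
      simp [Dm] at hp
      simp only [cT]
      rw [cQ_neg _ _ _ _ (by linarith), cQ_neg _ _ _ _ (by linarith), ite_self]
  · have h' : (k : ℝ) + 1 ≤ l := by exact_mod_cast h
    obtain ⟨g, h1, h2⟩ := cQ_strip B A C k polyFun_snd polyFun_fst
    refine ⟨g, h1.contDiff _, fun p hp => ?_⟩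
    simp [Dm] at hp
    rw [cT_ge _ _ _ _ (by linarith)]
    exact h2 p hp.1 hp.2.1

lemma toSet_bd {v : ℤ × ℤ} {up : Bool} {p : Pt} (hp : p ∈ Tri.toSet ⟨v, up⟩) :
    (v.1 : ℝ) ≤ p.1 ∧ p.1 ≤ v.1 + 1 ∧ (v.2 : ℝ) ≤ p.2 ∧ p.2 ≤ v.2 + 1 := by
  cases up <;> simp [Tri.toSet] at hp <;> (refine ⟨?_, ?_, ?_, ?_⟩ <;> linarith)

lemma PT_cT (A B C : ℕ) : PT (A + B + C + 1) (cT tpow A B (C + 1)) := by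
  rintro ⟨⟨k, l⟩, up⟩
  have hor : (∀ p ∈ Tri.toSet ⟨(k, l), up⟩, p.2 ≤ p.1) ∨
      (∀ p ∈ Tri.toSet ⟨(k, l), up⟩, p.1 ≤ p.2) := by
    rcases lt_trichotomy l k with h | h | h
    · have h' : (l : ℝ) + 1 ≤ k := by exact_mod_cast h
      left; intro p hp; have := toSet_bd hp; simp at this; linarith
    · subst h
      cases up
      · left; intro p hp; simp [Tri.toSet] at hp; linarith
      · right; intro p hp; simp [Tri.toSet] at hp; linarith
    · have h' : (k : ℝ) + 1 ≤ l := by exact_mod_cast h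
      right; intro p hp; have := toSet_bd hp; simp at this; linarith
  rcases hor with h | h
  · obtain ⟨g, h1, h2⟩ := cQ_strip A B C l polyFun_fst polyFun_snd
    refine ⟨g, h1, fun p hp => ?_⟩
    have := toSet_bd hp
    rw [cT_le _ _ _ _ (h p hp)]
    exact h2 p this.2.2.1 this.2.2.2
  · obtain ⟨g, h1, h2⟩ := cQ_strip B A C k polyFun_snd polyFun_fst
    refine ⟨g, h1.mk_le (by omega), fun p hp => ?_⟩
    have := toSet_bd hp
    rw [cT_ge _ _ _ _ (h p hp)]
    exact h2 p this.1 this.2.1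

lemma isClosed_Dm (v : ℤ × ℤ) (i : Fin 3) : IsClosed (Dm v i) := by
  fin_cases i
  all_goals
    simp only [Dm]
    refine IsClosed.and ?_ (IsClosed.and ?_ (IsClosed.and ?_ ?_)) <;>
    exact isClosed_le (by fun_prop) (by fun_prop)

lemma seg_subset (ε : Edge) : Edge.seg ε ⊆ interior (Dm ε.1 ε.2) := by
  obtain ⟨⟨k, l⟩, i⟩ := ε
  rintro p ⟨t, h0, h1, rfl⟩
  rw [mem_interior]
  fin_cases i
  · refine ⟨{p | (k : ℝ) < p.1 ∧ p.1 < k + 1 ∧ (k : ℝ) - l < p.1 - p.2 ∧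
      p.1 - p.2 < (k : ℝ) - l + 1}, ?_, ?_, ?_⟩
    · rintro p ⟨h1, h2, h3, h4⟩
      exact ⟨h1.le, h2.le, h3.le, h4.le⟩
    · refine IsOpen.and ?_ (IsOpen.and ?_ (IsOpen.and ?_ ?_)) <;>
      exact isOpen_lt (by fun_prop) (by fun_prop)
    · simp [dirZ]; refine ⟨?_, ?_, ?_, ?_⟩ <;> linarith
  · refine ⟨{p | (l : ℝ) < p.2 ∧ p.2 < l + 1 ∧ (l : ℝ) - k < p.2 - p.1 ∧
      p.2 - p.1 < (l : ℝ) - k + 1}, ?_, ?_, ?_⟩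
    · rintro p ⟨h1, h2, h3, h4⟩
      exact ⟨h1.le, h2.le, h3.le, h4.le⟩
    · refine IsOpen.and ?_ (IsOpen.and ?_ (IsOpen.and ?_ ?_)) <;>
      exact isOpen_lt (by fun_prop) (by fun_prop)
    · simp [dirZ]; refine ⟨?_, ?_, ?_, ?_⟩ <;> linarith
  · refine ⟨{p | (k : ℝ) < p.1 ∧ p.1 < k + 1 ∧ (l : ℝ) < p.2 ∧ p.2 < l + 1}, ?_, ?_, ?_⟩
    · rintro p ⟨h1, h2, h3, h4⟩
      exact ⟨h1.le, h2.le, h3.le, h4.le⟩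
    · refine IsOpen.and ?_ (IsOpen.and ?_ (IsOpen.and ?_ ?_)) <;>
      exact isOpen_lt (by fun_prop) (by fun_prop)
    · simp [dirZ, h0, h1]

lemma cl_subset {T : Tri} {ε : Edge} (h : ε ∈ T.edges) : T.cl ⊆ Dm ε.1 ε.2 := by
  refine closure_minimal ?_ (isClosed_Dm _ _)
  obtain ⟨v, up⟩ := T
  cases up
  all_goals
    simp [Tri.edges] at h
    rcases h with h | h | h
    all_goals
      subst h
      intro p hp
      simp [Tri.toSet] at hp
      simp [Dm]
      refine ⟨?_, ?_, ?_, ?_⟩ <;> linarith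

/-- `B_n` is globally `C^r` on `ℝ²` with
`r = min{n₁+n₂, n₁+n₃, n₂+n₃} - 2`; it is `C^{dᵢ(n)}` on a neighbourhood of
every edge of `G` of type `i`, where `d(n) = (n₂+n₃-2, n₁+n₃-2, n₁+n₂-2)`; and
consequently `B_n ∈ S^{d(n)}(M, P_{n₁+n₂+n₃-2})` for every multicell domain. -/
theorem statement15 (n₁ n₂ n₃ : ℕ) (h₁ : 1 ≤ n₁) (h₂ : 1 ≤ n₂) (h₃ : 1 ≤ n₃) :
    ContDiff ℝ ((min (min (n₁ + n₂) (n₁ + n₃)) (n₂ + n₃) - 2 : ℕ))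
      (boxN n₁ n₂ n₃) ∧
    (∀ ε : Edge, ∃ U : Set Pt, IsOpen U ∧ Edge.seg ε ⊆ U ∧
      ContDiffOn ℝ ((![n₂ + n₃ - 2, n₁ + n₃ - 2, n₁ + n₂ - 2] ε.2 : ℕ))
        (boxN n₁ n₂ n₃) U) ∧
    (∀ M : Finset Tri, M.Nonempty →
      boxN n₁ n₂ n₃ ∈
        SplineSpace M {q : BPoly | q.totalDegree ≤ n₁ + n₂ + n₃ - 2}
          ![n₂ + n₃ - 2, n₁ + n₃ - 2, n₁ + n₂ - 2]) := by
  obtain ⟨A, rfl⟩ : ∃ i, n₁ = i + 1 := ⟨n₁ - 1, by omega⟩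
  obtain ⟨B, rfl⟩ : ∃ i, n₂ = i + 1 := ⟨n₂ - 1, by omega⟩
  obtain ⟨C, rfl⟩ : ∃ i, n₃ = i + 1 := ⟨n₃ - 1, by omega⟩
  have hE : ∀ i : Fin 3, PE i (![B + 1 + (C + 1) - 2, A + 1 + (C + 1) - 2, A + 1 + (B + 1) - 2] i)
      (boxN (A + 1) (B + 1) (C + 1)) := by
    intro i
    rw [boxN_eq]
    refine Nab_closed _ (fun w f => PE_nab _ _ w f) _ _ _ ?_
    fin_cases i
    · change PE 0 (B + 1 + (C + 1) - 2) _
      rw [show B + 1 + (C + 1) - 2 = B + C by omega]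
      exact PE0_cT A B C
    · change PE 1 (A + 1 + (C + 1) - 2) _
      rw [show A + 1 + (C + 1) - 2 = A + C by omega]
      exact PE1_cT A B C
    · change PE 2 (A + 1 + (B + 1) - 2) _
      rw [show A + 1 + (B + 1) - 2 = A + B by omega]
      exact PE2_cT A B C
  have hT : PT (A + 1 + (B + 1) + (C + 1) - 2) (boxN (A + 1) (B + 1) (C + 1)) := by
    rw [boxN_eq]
    refine Nab_closed _ (fun w f => PT_nab _ w f) _ _ _ ?_
    convert PT_cT A B C using 1; omega
  have hG : ∀ r : ℕ, r ≤ A + B → r ≤ A + C → r ≤ B + C →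
      ContDiff ℝ r (boxN (A + 1) (B + 1) (C + 1)) := by
    intro r h1 h2 h3
    rw [boxN_eq]
    refine Nab_closed (fun f => ContDiff ℝ r f) (fun w f hf => ?_) _ _ _
      (cT_global r A B C h1 h2 h3)
    exact hf.sub (hf.comp (by fun_prop))
  refine ⟨hG _ (by omega) (by omega) (by omega), fun ε => ?_, fun M _ => ⟨⟨?_, fun T _ => ?_⟩, ?_⟩⟩
  · obtain ⟨g, h1, h2⟩ := hE ε.2 ε.1
    exact ⟨interior (Dm ε.1 ε.2), isOpen_interior, seg_subset ε,
      h1.contDiffOn.congr (h2.mono interior_subset)⟩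
  · exact (hG 0 (by omega) (by omega) (by omega)).continuous.continuousOn
  · obtain ⟨g, ⟨q, hq, hq'⟩, h2⟩ := hT T
    exact ⟨q, hq, fun p hp => (h2 hp).trans (hq' p)⟩
  · intro ε _
    obtain ⟨g, h1, h2⟩ := hE ε.2 ε.1
    refine h1.contDiffOn.congr (h2.mono ?_)
    refine iUnion₂_subset fun T hT => ?_
    exact cl_subset (Finset.mem_filter.1 hT).2

end
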